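/- arXiv:math/0008181 — 3 statements merged into one kernel-verified Lean document; each statement's English description precedes it below -/
import Mathlib

section
/- Let A be a unital C*-algebra satisfying: for each finite F ⊂ A and ε > 0 there is a contractive completely positive map φ : A → B into a finite dimensional C*-algebra B with ‖φ(x)‖ ≥ ‖x‖ - ε for x ∈ F and ‖φ(xy) - φ(x)φ(y)‖ ≤ ε for x,y ∈ F. Then A satisfies the same condition with φ a unital completely positive map into a full matrix algebra M_n(ℂ). -/
open Filter Topology

/-- The algebra `B(ℂⁿ) ≅ Mₙ(ℂ)`. -/
abbrev MatOp (n : ℕ) := EuclideanSpace ℂ (Fin n) →L[ℂ] EuclideanSpace ℂ (Fin n)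

/-- Complete positivity of a linear map into `Mₙ(ℂ)`. -/
def IsCPIntoMat {A : Type*} [NonUnitalNormedRing A] [StarRing A] [Module ℂ A] {n : ℕ}
    (φ : A →ₗ[ℂ] MatOp n) : Prop :=
  ∀ (k : ℕ) (a : Fin k → A) (c : Fin k → MatOp n),
    (∑ i, ∑ j, star (c i) * φ (star (a i) * a j) * c j).IsPositive

open ContinuousLinearMap in
/-- A self-adjoint operator which is diagonal in an orthonormal basis, with all eigenvalues bounded
by `C` in absolute value, has norm at most `C`. -/
theorem opNorm_le_of_apply_orthonormalBasis {ι E : Type*} [Fintype ι] [NormedAddCommGroup E]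
    [InnerProductSpace ℂ E] [CompleteSpace E] (e : OrthonormalBasis ι ℂ E) {T : E →L[ℂ] E}
    (hT : IsSelfAdjoint T) (μ : ι → ℝ) {C : ℝ} (hC : 0 ≤ C)
    (hμ : ∀ i, |μ i| ≤ C) (he : ∀ i, T (e i) = (μ i : ℂ) • e i) : ‖T‖ ≤ C := by
  refine T.opNorm_le_bound hC fun x => ?_
  refine le_of_sq_le_sq ?_ (by positivity)
  rw [← e.sum_sq_norm_inner_right, mul_pow, ← e.sum_sq_norm_inner_right x, Finset.mul_sum]
  refine Finset.sum_le_sum fun i _ => ?_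
  rw [← adjoint_inner_left, hT.adjoint_eq, he, inner_smul_left, norm_mul, mul_pow]
  gcongr
  simpa using hμ i

open ContinuousLinearMap in
/-- A positive contraction `b` which is almost idempotent can be compressed to the identity by an
operator `W` with `W W*` close to `b`. -/
theorem exists_compression_eq_one {m : ℕ} {b : MatOp m} (hb : b.IsPositive) (hb1 : ‖b‖ ≤ 1)
    {δ : ℝ} (hδ : 0 ≤ δ) (hbδ : ‖b - b * b‖ ≤ δ) :
    ∃ (n : ℕ) (W : EuclideanSpace ℂ (Fin n) →L[ℂ] EuclideanSpace ℂ (Fin m)),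
      adjoint W ∘L b ∘L W = 1 ∧ ‖W ∘L adjoint W - b‖ ≤ 8 * δ := by
  have hsym : (b : EuclideanSpace ℂ (Fin m) →ₗ[ℂ] EuclideanSpace ℂ (Fin m)).IsSymmetric :=
    hb.isSymmetric
  have hdim : Module.finrank ℂ (EuclideanSpace ℂ (Fin m)) = m := by simp
  set e := hsym.eigenvectorBasis hdim
  set l : Fin m → ℝ := hsym.eigenvalues hdim
  have hbe : ∀ i, b (e i) = (l i : ℂ) • e i := fun i => hsym.apply_eigenvectorBasis hdim i
  have hnorm : ∀ i, ‖e i‖ = 1 := fun i => e.norm_eq_one i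
  have hl0 : ∀ i, 0 ≤ l i := fun i => by
    have := hb.inner_nonneg_right (e i)
    rw [hbe, inner_smul_right, inner_self_eq_norm_sq_to_K, hnorm] at this
    simpa using this
  have hl1 : ∀ i, l i ≤ 1 := fun i => by
    have := (b.le_opNorm (e i)).trans (mul_le_mul_of_nonneg_right hb1 (norm_nonneg _))
    rw [hbe, norm_smul, hnorm] at this
    simpa [abs_of_nonneg (hl0 i)] using this
  have hlδ : ∀ i, l i - l i * l i ≤ δ := fun i => by
    have h1 := ((b - b * b).le_opNorm (e i)).trans
      (mul_le_mul_of_nonneg_right hbδ (norm_nonneg _))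
    have h2 : (b - b * b) (e i) = ((l i - l i * l i : ℝ) : ℂ) • e i := by
      simp [hbe, sub_smul, mul_smul]
    rw [h2, norm_smul, hnorm, Complex.norm_real] at h1
    exact (le_abs_self _).trans (by simpa using h1)
  let s : Finset (Fin m) := Finset.univ.filter fun i => 1 / 2 ≤ l i
  let q : Fin s.card ≃ s := s.equivFin.symm
  have hq : ∀ k, 1 / 2 ≤ l (q k) := fun k => (Finset.mem_filter.1 (q k).2).2
  let d := EuclideanSpace.basisFun (Fin s.card) ℂ
  let W : EuclideanSpace ℂ (Fin s.card) →L[ℂ] EuclideanSpace ℂ (Fin m) :=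
    LinearMap.toContinuousLinearMap
      (d.toBasis.constr ℂ fun k => (((√(l (q k)))⁻¹ : ℝ) : ℂ) • e (q k))
  have hW : ∀ k, W (d k) = (((√(l (q k)))⁻¹ : ℝ) : ℂ) • e (q k) := fun k => by
    rw [← d.coe_toBasis]
    exact d.toBasis.constr_basis ℂ _ k
  have hee : ∀ i j, inner ℂ (e i) (e j) = if i = j then (1 : ℂ) else 0 :=
    orthonormal_iff_ite.1 e.orthonormal
  have hdd : ∀ i j, inner ℂ (d i) (d j) = if i = j then (1 : ℂ) else 0 :=
    orthonormal_iff_ite.1 d.orthonormal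
  have hWq : ∀ k, adjoint W (e (q k)) = (((√(l (q k)))⁻¹ : ℝ) : ℂ) • d k := fun k => by
    refine InnerProductSpace.ext_inner_left_basis d.toBasis fun j => ?_
    rw [d.coe_toBasis, adjoint_inner_right, hW, inner_smul_left, inner_smul_right, hee, hdd]
    by_cases hjk : j = k
    · subst hjk; simp
    · have : (q j : Fin m) ≠ q k := fun h => hjk (q.injective (Subtype.ext h))
      simp [hjk, this]
  have hWs : ∀ i, i ∉ s → adjoint W (e i) = 0 := fun i hi => by
    refine InnerProductSpace.ext_inner_left_basis d.toBasis fun j => ?_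
    have : (q j : Fin m) ≠ i := fun h => hi (h ▸ (q j).2)
    rw [d.coe_toBasis, adjoint_inner_right, hW, inner_smul_left, hee]
    simp [this]
  refine ⟨s.card, W, ?_, ?_⟩
  · refine ContinuousLinearMap.coe_injective (d.toBasis.ext fun k => ?_)
    have h0 : 0 < l (q k) := by linarith [hq k]
    have h1 : (√(l (q k)))⁻¹ * l (q k) * (√(l (q k)))⁻¹ = 1 := by
      have := Real.sqrt_pos.2 h0
      nth_rewrite 2 [← Real.mul_self_sqrt h0.le]
      field_simp
    have h2 : adjoint W (b (W (d k))) = d k := by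
      rw [hW, map_smul, hbe, map_smul, map_smul, hWq, smul_smul, smul_smul, ← Complex.ofReal_mul,
        ← Complex.ofReal_mul, h1]
      simp
    simpa using h2
  · refine opNorm_le_of_apply_orthonormalBasis e
      (IsSelfAdjoint.sub (isPositive_self_comp_adjoint W).isSelfAdjoint hb.isSelfAdjoint)
      (fun i => if i ∈ s then (l i)⁻¹ - l i else - l i) (by positivity) (fun i => ?_) fun i => ?_
    · have h0 := hl0 i
      have h1 := hl1 i
      have h2 := hlδ i
      by_cases hi : i ∈ s
      · have hh : 1 / 2 ≤ l i := (Finset.mem_filter.1 hi).2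
        have hpos : 0 < l i := by linarith
        have hinv : (l i)⁻¹ ≤ 2 := by
          rw [inv_le_comm₀ hpos (by norm_num)]; linarith
        have hone : 1 ≤ (l i)⁻¹ := (one_le_inv₀ hpos).2 h1
        rw [if_pos hi, abs_of_nonneg (by linarith)]
        have h3 : (l i)⁻¹ - l i = (l i)⁻¹ * (l i)⁻¹ * (1 + l i) * (l i - l i * l i) := by
          field_simp
          ring
        have h4 : (l i)⁻¹ * (l i)⁻¹ * (1 + l i) ≤ 2 * 2 * (1 + 1) := by gcongr
        have h5 : 0 ≤ l i - l i * l i := by nlinarith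
        rw [h3]
        calc _ ≤ 2 * 2 * (1 + 1) * (l i - l i * l i) := by gcongr
          _ ≤ 8 * δ := by linarith
      · have hh : l i < 1 / 2 := by
          by_contra hcon
          exact hi (Finset.mem_filter.2 ⟨Finset.mem_univ _, not_lt.1 hcon⟩)
        rw [if_neg hi, abs_neg, abs_of_nonneg h0]
        nlinarith
    · by_cases hi : i ∈ s
      · obtain ⟨k, hk⟩ := q.surjective ⟨i, hi⟩
        obtain rfl : (q k : Fin m) = i := by rw [hk]
        have h0 : 0 ≤ l (q k) := hl0 _
        rw [if_pos hi, sub_apply, comp_apply, hWq, map_smul, hW, hbe, smul_smul,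
          ← Complex.ofReal_mul, ← mul_inv, Real.mul_self_sqrt h0, Complex.ofReal_sub, sub_smul]
      · rw [if_neg hi, sub_apply, comp_apply, hWs i hi, hbe]
        simp

open ContinuousLinearMap in
/-- The compression `a ↦ W* φ(a) W` of a linear map into operators. -/
noncomputable def compressMap {A : Type*} [AddCommMonoid A] [Module ℂ A] {m n : ℕ}
    (W : EuclideanSpace ℂ (Fin n) →L[ℂ] EuclideanSpace ℂ (Fin m)) (φ : A →ₗ[ℂ] MatOp m) :
    A →ₗ[ℂ] MatOp n where
  toFun a := adjoint W ∘L φ a ∘L W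
  map_add' a a' := by simp
  map_smul' c a := by simp

open ContinuousLinearMap in
theorem compressMap_apply {A : Type*} [AddCommMonoid A] [Module ℂ A] {m n : ℕ}
    (W : EuclideanSpace ℂ (Fin n) →L[ℂ] EuclideanSpace ℂ (Fin m)) (φ : A →ₗ[ℂ] MatOp m) (a : A) :
    compressMap W φ a = adjoint W ∘L φ a ∘L W := rfl

open ContinuousLinearMap in
/-- Compressing by an operator with a left inverse preserves complete positivity. -/
theorem IsCPIntoMat.compressMap {A : Type*} [NonUnitalNormedRing A] [StarRing A] [Module ℂ A]
    {m n : ℕ} {φ : A →ₗ[ℂ] MatOp m} (hφ : IsCPIntoMat φ)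
    {W : EuclideanSpace ℂ (Fin n) →L[ℂ] EuclideanSpace ℂ (Fin m)}
    {L : EuclideanSpace ℂ (Fin m) →L[ℂ] EuclideanSpace ℂ (Fin n)}
    (hL : L ∘L W = 1) : IsCPIntoMat (compressMap W φ) := by
  intro k a c
  have hL' : adjoint W ∘L adjoint L = 1 := by
    rw [← adjoint_comp, hL]
    exact star_one (MatOp n)
  have key := (hφ k a fun i => W ∘L c i ∘L adjoint W).conj_adjoint L
  convert key using 1
  ext1 x
  have h1 : ∀ y, L (W y) = y := fun y => DFunLike.congr_fun hL y
  have h2 : ∀ y, adjoint W (adjoint L y) = y := fun y => DFunLike.congr_fun hL' y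
  simp [star_eq_adjoint, adjoint_comp, compressMap_apply, h1, h2, sum_apply]

open ContinuousLinearMap in
theorem norm_self_comp_adjoint {E F : Type*} [NormedAddCommGroup E] [InnerProductSpace ℂ E]
    [CompleteSpace E] [NormedAddCommGroup F] [InnerProductSpace ℂ F] [CompleteSpace F]
    (W : E →L[ℂ] F) : ‖W ∘L adjoint W‖ = ‖W‖ * ‖W‖ := by
  simpa only [adjoint_adjoint, LinearIsometryEquiv.norm_map] using
    norm_adjoint_comp_self (adjoint W)

open ContinuousLinearMap in
/-- Compression by `W` is almost multiplicative where `W W*` almost acts as a unit. -/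
theorem norm_compress_mul_sub_le {m n : ℕ}
    (W : EuclideanSpace ℂ (Fin n) →L[ℂ] EuclideanSpace ℂ (Fin m)) (X Y Z : MatOp m) :
    ‖adjoint W ∘L Z ∘L W - (adjoint W ∘L X ∘L W) * (adjoint W ∘L Y ∘L W)‖ ≤
      ‖W ∘L adjoint W‖ * (‖Z - X * Y‖ + ‖X‖ * ‖(W ∘L adjoint W) * Y - Y‖) := by
  set G : MatOp m := W ∘L adjoint W with hG
  have hWG : ‖W‖ * ‖W‖ = ‖G‖ := (norm_self_comp_adjoint W).symm
  have h1 : adjoint W ∘L Z ∘L W - (adjoint W ∘L X ∘L W) * (adjoint W ∘L Y ∘L W) =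
      adjoint W ∘L ((Z - X * Y) - X * (G * Y - Y)) ∘L W := by
    ext1 x
    simp [hG]
  rw [h1]
  calc _ ≤ ‖adjoint W‖ * (‖(Z - X * Y) - X * (G * Y - Y)‖ * ‖W‖) :=
        (opNorm_comp_le _ _).trans (by gcongr; exact opNorm_comp_le _ _)
    _ = ‖G‖ * ‖(Z - X * Y) - X * (G * Y - Y)‖ := by
        rw [LinearIsometryEquiv.norm_map, ← hWG]; ring
    _ ≤ _ := by
        gcongr
        exact (norm_sub_le _ _).trans (by gcongr; exact norm_mul_le _ _)

open ContinuousLinearMap in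
/-- Compression by `W` almost preserves norms where `W W*` almost acts as a unit. -/
theorem norm_le_norm_compress_add {m n : ℕ}
    (W : EuclideanSpace ℂ (Fin n) →L[ℂ] EuclideanSpace ℂ (Fin m)) (X : MatOp m) :
    ‖X‖ ≤ ‖W ∘L adjoint W‖ * ‖adjoint W ∘L X ∘L W‖ +
      ‖(W ∘L adjoint W) * X - X‖ * ‖W ∘L adjoint W‖ + ‖X * (W ∘L adjoint W) - X‖ := by
  set G : MatOp m := W ∘L adjoint W with hG
  have hWG : ‖W‖ * ‖W‖ = ‖G‖ := (norm_self_comp_adjoint W).symm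
  have h1 : X = W ∘L (adjoint W ∘L X ∘L W) ∘L adjoint W - (G * X - X) * G - (X * G - X) := by
    ext1 x
    simp [hG]
  have h2 : ‖W ∘L (adjoint W ∘L X ∘L W) ∘L adjoint W‖ ≤ ‖G‖ * ‖adjoint W ∘L X ∘L W‖ :=
    calc _ ≤ ‖W‖ * (‖adjoint W ∘L X ∘L W‖ * ‖adjoint W‖) :=
        (opNorm_comp_le _ _).trans (by gcongr; exact opNorm_comp_le _ _)
      _ = _ := by rw [LinearIsometryEquiv.norm_map, ← hWG]; ring
  calc ‖X‖ = _ := congrArg norm h1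
    _ ≤ _ := (norm_sub_le _ _).trans
      (add_le_add_left ((norm_sub_le _ _).trans (add_le_add h2 (norm_mul_le _ _))) _)

/-- Voiculescu's `(∗)` implies `(∗∗)`: if for every finite `F ⊆ A` and `ε > 0` there is a
contractive completely positive map into a finite dimensional `C*`-algebra (realized as a
star subalgebra of some `Mₘ(ℂ)`) which is `ε`-isometric and `ε`-multiplicative on `F`,
then for every finite `F` and `ε > 0` there is a *unital* completely positive map into a
full matrix algebra `Mₙ(ℂ)` with the same properties. -/
theorem star_star_of_star {A : Type*} [CStarAlgebra A]
    (h : ∀ (F : Finset A) (ε : ℝ), 0 < ε →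
      ∃ (m : ℕ) (S : StarSubalgebra ℂ (MatOp m)) (φ : A →ₗ[ℂ] MatOp m),
        (∀ a : A, φ a ∈ S) ∧ (∀ a : A, ‖φ a‖ ≤ ‖a‖) ∧ IsCPIntoMat φ ∧
        (∀ x ∈ F, ‖x‖ - ε ≤ ‖φ x‖) ∧
        ∀ x ∈ F, ∀ y ∈ F, ‖φ (x * y) - φ x * φ y‖ ≤ ε) :
    ∀ (F : Finset A) (ε : ℝ), 0 < ε →
      ∃ (n : ℕ) (φ : A →ₗ[ℂ] MatOp n),
        φ 1 = 1 ∧ IsCPIntoMat φ ∧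
        (∀ x ∈ F, ‖x‖ - ε ≤ ‖φ x‖) ∧
        ∀ x ∈ F, ∀ y ∈ F, ‖φ (x * y) - φ x * φ y‖ ≤ ε := by
  intro F ε hε
  obtain ⟨R, hR1, hR⟩ : ∃ R : ℝ, 1 ≤ R ∧ ∀ x ∈ F, ‖x‖ ≤ R :=
    ⟨1 + ∑ x ∈ F, ‖x‖, by linarith [Finset.sum_nonneg fun x (_ : x ∈ F) => norm_nonneg x],
      fun x hx => by
        linarith [Finset.single_le_sum (f := fun x : A => ‖x‖) (fun y _ => norm_nonneg y) hx]⟩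
  obtain ⟨δ, hδ, hδ1, hδε⟩ : ∃ δ : ℝ, 0 < δ ∧ δ ≤ 1 / 8 ∧ 44 * R ^ 2 * δ ≤ ε := by
    refine ⟨min (1 / 8) (ε / (44 * R ^ 2)), by positivity, min_le_left _ _, ?_⟩
    calc _ ≤ 44 * R ^ 2 * (ε / (44 * R ^ 2)) := by gcongr; exact min_le_right _ _
      _ = ε := by field_simp
  classical
  obtain ⟨m, -, φ, -, hcontr, hcp, hiso, hmul⟩ := h (insert 1 F) δ hδ
  have hpos : (φ 1).IsPositive := by simpa using hcp 1 (fun _ => 1) (fun _ => 1)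
  have hone : ‖φ 1‖ ≤ 1 := (hcontr 1).trans (by
    nontriviality A
    exact norm_one.le)
  have h1F : (1 : A) ∈ insert 1 F := Finset.mem_insert_self _ _
  obtain ⟨n, W, hW1, hWb⟩ := exists_compression_eq_one hpos hone hδ.le
    (by simpa using hmul 1 h1F 1 h1F)
  set G : MatOp m := W ∘L ContinuousLinearMap.adjoint W with hG
  have hGnorm : ‖G‖ ≤ 1 + 8 * δ := by
    calc ‖G‖ = ‖φ 1 + (G - φ 1)‖ := by rw [add_sub_cancel]
      _ ≤ _ := (norm_add_le _ _).trans (add_le_add hone hWb)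
  have hφR : ∀ x ∈ F, ‖φ x‖ ≤ R := fun x hx => (hcontr x).trans (hR x hx)
  have hleft : ∀ x ∈ F, ‖G * φ x - φ x‖ ≤ 9 * R * δ := fun x hx => by
    have h1 := hmul 1 h1F x (Finset.mem_insert_of_mem hx)
    rw [one_mul] at h1
    calc ‖G * φ x - φ x‖ = ‖(G - φ 1) * φ x - (φ x - φ 1 * φ x)‖ := by
          rw [sub_mul]; congr 1; abel
      _ ≤ ‖G - φ 1‖ * ‖φ x‖ + ‖φ x - φ 1 * φ x‖ :=
        (norm_sub_le _ _).trans (by gcongr; exact norm_mul_le _ _)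
      _ ≤ 8 * δ * R + δ := by gcongr; exact hφR x hx
      _ ≤ 9 * R * δ := by nlinarith
  have hright : ∀ x ∈ F, ‖φ x * G - φ x‖ ≤ 9 * R * δ := fun x hx => by
    have h1 := hmul x (Finset.mem_insert_of_mem hx) 1 h1F
    rw [mul_one] at h1
    calc ‖φ x * G - φ x‖ = ‖φ x * (G - φ 1) - (φ x - φ x * φ 1)‖ := by
          rw [mul_sub]; congr 1; abel
      _ ≤ ‖φ x‖ * ‖G - φ 1‖ + ‖φ x - φ x * φ 1‖ :=
        (norm_sub_le _ _).trans (by gcongr; exact norm_mul_le _ _)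
      _ ≤ R * (8 * δ) + δ := by gcongr; exact hφR x hx
      _ ≤ 9 * R * δ := by nlinarith
  have hG2 : ‖G‖ ≤ 2 := by linarith
  have hRδ : R * δ ≤ R ^ 2 * δ := by gcongr; nlinarith
  have hδR : δ ≤ R * δ := by nlinarith
  refine ⟨n, compressMap W φ, hW1,
    hcp.compressMap (L := ContinuousLinearMap.adjoint W ∘L φ 1) hW1, fun x hx => ?_,
    fun x hx y hy => ?_⟩
  · have h1 := norm_le_norm_compress_add W (φ x)
    rw [← compressMap_apply, ← hG] at h1
    have h2 := hiso x (Finset.mem_insert_of_mem hx)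
    have h3 : ‖G * φ x - φ x‖ * ‖G‖ ≤ 9 * R * δ * 2 := by gcongr; exact hleft x hx
    have h4 := hright x hx
    by_cases hle : ‖x‖ ≤ ‖compressMap W φ x‖
    · linarith
    · have h5 : ‖compressMap W φ x‖ ≤ R := (not_le.1 hle).le.trans (hR x hx)
      have h6 : ‖G‖ * ‖compressMap W φ x‖ ≤ (1 + 8 * δ) * ‖compressMap W φ x‖ := by gcongr
      have h7 : 8 * δ * ‖compressMap W φ x‖ ≤ 8 * δ * R := by gcongr
      linarith
  · have h1 := norm_compress_mul_sub_le W (φ x) (φ y) (φ (x * y))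
    rw [← hG] at h1
    refine h1.trans ?_
    calc _ ≤ 2 * (δ + R * (9 * R * δ)) := by
          gcongr
          · exact hmul x (Finset.mem_insert_of_mem hx) y (Finset.mem_insert_of_mem hy)
          · exact hφR x hx
          · exact hleft y hy
      _ ≤ ε := by nlinarith
end

section
/- Let 0 → I → E → B → 0 be a quasidiagonal extension (I has an approximate unit of projections quasicentral in E) with both I and B quasidiagonal C*-algebras. Then E is quasidiagonal. -/
open Filter Topology

/-- Voiculescu's abstract characterization of quasidiagonality: for every finite set `F`
and `ε > 0` there is a contractive completely positive map into a finite dimensional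
`C*`-algebra (a star subalgebra of some matrix algebra) which is `ε`-isometric and
`ε`-multiplicative on `F`. -/
def VQD (A : Type*) [NonUnitalNormedRing A] [StarRing A] [Module ℂ A] : Prop :=
  ∀ (F : Finset A) (ε : ℝ), 0 < ε →
    ∃ (m : ℕ) (S : StarSubalgebra ℂ (MatOp m)) (φ : A →ₗ[ℂ] MatOp m),
      (∀ a : A, φ a ∈ S) ∧ (∀ a : A, ‖φ a‖ ≤ ‖a‖) ∧ IsCPIntoMat φ ∧
      (∀ x ∈ F, ‖x‖ - ε ≤ ‖φ x‖) ∧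
      ∀ x ∈ F, ∀ y ∈ F, ‖φ (x * y) - φ x * φ y‖ ≤ ε

section CStarAlgebra

variable {E : Type*} [NonUnitalCStarAlgebra E]

lemma norm_add_le_max_of_orthogonal {a b : E} (h₁ : star a * b = 0) (h₂ : a * star b = 0) :
    ‖a + b‖ ≤ max ‖a‖ ‖b‖ := by
  have h₁' : star b * a = 0 := by simpa using congrArg star h₁
  have hab : (star a * a) * (star b * b) = 0 := by
    rw [mul_assoc, ← mul_assoc a, h₂, zero_mul, mul_zero]
  have key : ‖a + b‖ * ‖a + b‖ = max (‖a‖ * ‖a‖) (‖b‖ * ‖b‖) := by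
    rw [← CStarRing.norm_star_mul_self, ← CStarRing.norm_star_mul_self,
      ← CStarRing.norm_star_mul_self,
      ← (IsSelfAdjoint.star_mul_self a).norm_add_eq_max (IsSelfAdjoint.star_mul_self b) hab]
    congr 1
    simp [mul_add, add_mul, h₁, h₁']
  refine nonneg_le_nonneg_of_sq_le_sq (by positivity) (key.trans_le (max_le ?_ ?_))
  · exact mul_self_le_mul_self (norm_nonneg _) (le_max_left _ _)
  · exact mul_self_le_mul_self (norm_nonneg _) (le_max_right _ _)

namespace IsStarProjection

variable {p : E}

lemma norm_le_one (hp : IsStarProjection p) : ‖p‖ ≤ 1 := by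
  have h : ‖p‖ = ‖p‖ * ‖p‖ := by
    conv_lhs => rw [← hp.isIdempotentElem.eq]
    conv_lhs => rw [← hp.isSelfAdjoint.star_eq]
    rw [← CStarRing.norm_star_mul_self, hp.isSelfAdjoint.star_eq]
  nlinarith [norm_nonneg p]

lemma norm_sub_mul_left_le (hp : IsStarProjection p) (z : E) : ‖z - p * z‖ ≤ ‖z‖ := by
  have h : star (z - p * z) * (z - p * z) = star z * (z - p * z) := by
    have hpz : p * (z - p * z) = 0 := by
      rw [mul_sub, ← mul_assoc, hp.isIdempotentElem.eq, sub_self]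
    rw [star_sub, star_mul, hp.isSelfAdjoint.star_eq, sub_mul, mul_assoc, hpz, mul_zero, sub_zero]
  have h' : ‖z - p * z‖ * ‖z - p * z‖ ≤ ‖z‖ * ‖z - p * z‖ := by
    rw [← CStarRing.norm_star_mul_self, h]
    simpa using norm_mul_le (star z) (z - p * z)
  rcases (norm_nonneg (z - p * z)).eq_or_lt with h0 | h0
  · rw [← h0]; exact norm_nonneg z
  · exact le_of_mul_le_mul_right h' h0

lemma norm_sub_mul_right_le (hp : IsStarProjection p) (z : E) : ‖z - z * p‖ ≤ ‖z‖ := by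
  simpa [← norm_star (z - z * p), hp.isSelfAdjoint.star_eq] using hp.norm_sub_mul_left_le (star z)

lemma norm_mul_mul_le (hp : IsStarProjection p) (x : E) : ‖p * x * p‖ ≤ ‖x‖ :=
  calc ‖p * x * p‖ ≤ ‖p‖ * ‖x‖ * ‖p‖ :=
        (norm_mul_le _ _).trans (by gcongr; exact norm_mul_le _ _)
    _ ≤ 1 * ‖x‖ * 1 := by gcongr <;> exact hp.norm_le_one
    _ = ‖x‖ := by ring

lemma norm_compress_mul_sub_le (hp : IsStarProjection p) (x y : E) :
    ‖p * (x * y) * p - (p * x * p) * (p * y * p)‖ ≤ ‖x‖ * ‖p * y - y * p‖ := by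
  have h : p * (x * y) * p - (p * x * p) * (p * y * p) = p * (x * (y * p - p * y)) * p := by
    have := hp.isIdempotentElem.eq
    simp only [mul_sub, sub_mul, mul_assoc, this]
    simp only [← mul_assoc p p, this]
  rw [h, norm_sub_rev (p * y)]
  exact (hp.norm_mul_mul_le _).trans (norm_mul_le _ _)

/-- Up to the commutator with `p`, an element is the orthogonal sum of its two corners. -/
lemma norm_le_max_corners_add (hp : IsStarProjection p) (x y : E) :
    ‖x‖ ≤ max ‖p * x * p‖ (‖x - y‖ + ‖p * y - y‖) + 2 * ‖p * x - x * p‖ := by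
  have hpp := hp.isIdempotentElem.eq
  have hps := hp.isSelfAdjoint.star_eq
  set q : E → E := fun z => (z - p * z) - (z - p * z) * p with hq
  have hpq : ∀ z, p * q z = 0 := fun z => by
    simp [hq, mul_sub, sub_mul, ← mul_assoc, hpp]
  have hqp : ∀ z, q z * p = 0 := fun z => by
    simp [hq, sub_mul, mul_assoc, hpp]
  have horth : ‖p * x * p + q x‖ ≤ max ‖p * x * p‖ ‖q x‖ := by
    refine norm_add_le_max_of_orthogonal ?_ ?_
    · simp only [star_mul, hps, mul_assoc, hpq, mul_zero]
    · have : p * star (q x) = 0 := by simpa [hps] using congrArg star (hqp x)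
      rw [mul_assoc, this, mul_zero]
  have hqx : ‖q x‖ ≤ ‖x - y‖ + ‖p * y - y‖ := by
    have : q x = q (x - y) + q y := by
      simp only [hq, mul_sub, sub_mul]; abel
    rw [this]
    refine (norm_add_le _ _).trans (add_le_add ?_ ?_)
    · exact (hp.norm_sub_mul_right_le _).trans (hp.norm_sub_mul_left_le _)
    · exact (hp.norm_sub_mul_right_le _).trans (norm_sub_rev _ _).le
  have hrest : x = (p * x * p + q x) + (p * (p * x - x * p) - (p * x - x * p) * p) := by
    simp only [hq, mul_sub, sub_mul, ← mul_assoc, hpp]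
    simp only [mul_assoc, hpp]
    abel
  have hc : ‖p * (p * x - x * p) - (p * x - x * p) * p‖ ≤ 2 * ‖p * x - x * p‖ := by
    have h1 := (norm_mul_le p (p * x - x * p)).trans
      (mul_le_mul_of_nonneg_right hp.norm_le_one (norm_nonneg _))
    have h2 := (norm_mul_le (p * x - x * p) p).trans
      (mul_le_mul_of_nonneg_left hp.norm_le_one (norm_nonneg _))
    linarith [norm_sub_le (p * (p * x - x * p)) ((p * x - x * p) * p)]
  calc ‖x‖ ≤ ‖p * x * p + q x‖ + ‖p * (p * x - x * p) - (p * x - x * p) * p‖ := by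
        conv_lhs => rw [hrest]
        exact norm_add_le _ _
    _ ≤ _ := add_le_add (horth.trans (max_le_max le_rfl hqx)) hc

end IsStarProjection

variable {B : Type*} [NonUnitalCStarAlgebra B]

/-- A star homomorphism induces an isometry on the quotient by its kernel; this is the nontrivial
inequality. -/
lemma NonUnitalStarAlgHom.exists_map_eq_zero_norm_sub_le (π : E →⋆ₙₐ[ℂ] B) (x : E) {r : ℝ}
    (hr : 0 < r) (hx : ‖π x‖ ≤ r) : ∃ y, π y = 0 ∧ ‖x - y‖ ≤ r := by
  have hden : ∀ t : ℝ, 0 < max r √|t| := fun t => lt_max_of_lt_left hr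
  set f : ℝ → ℝ := fun t => 1 - r / max r √|t| with hf
  have hfc : Continuous f := by
    refine continuous_const.sub (continuous_const.div ?_ fun t => (hden t).ne')
    fun_prop
  have hf0 : f 0 = 0 := by simp [hf, hr.le, hr.ne']
  have hsa : IsSelfAdjoint (star x * x) := IsSelfAdjoint.star_mul_self x
  set g := cfcₙ f (star x * x) with hg
  have hgs : star g = g := (cfcₙ_predicate f (star x * x) : IsSelfAdjoint _).star_eq
  refine ⟨x * g, ?_, ?_⟩
  · have hsa' : IsSelfAdjoint (π (star x * x)) := hsa.map π
    have hgz : π g = 0 := by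
      rw [hg, NonUnitalStarAlgHom.map_cfcₙ π f (star x * x) hfc.continuousOn hf0
        (AddMonoidHomClass.continuous_of_bound π 1 fun z => by
          simpa using NonUnitalStarAlgHom.norm_apply_le π z) hsa hsa',
        ← cfcₙ_zero ℝ (π (star x * x))]
      refine cfcₙ_congr fun t ht => ?_
      have h1 : |t| ≤ r ^ 2 := by
        have := norm_apply_le_norm_cfcₙ (id : ℝ → ℝ) (π (star x * x)) ht
        rw [cfcₙ_id ℝ (π (star x * x)) hsa', map_mul, map_star,
          CStarRing.norm_star_mul_self] at this
        simp only [id, Real.norm_eq_abs] at this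
        nlinarith [norm_nonneg (π x)]
      have h2 : √|t| ≤ r := Real.sqrt_le_iff.mpr ⟨hr.le, h1⟩
      simp [hf, max_eq_left h2, hr.ne']
    rw [map_mul, hgz, mul_zero]
  · have hcalc : star (x - x * g) * (x - x * g) =
        cfcₙ (fun t : ℝ => t - f t * t - (t - f t * t) * f t) (star x * x) := by
      have hft : cfcₙ (fun t : ℝ => f t * t) (star x * x) = g * (star x * x) := by
        rw [cfcₙ_mul f (fun t => t) _ hfc.continuousOn hf0, cfcₙ_id' ℝ _ hsa]
      have hst : cfcₙ (fun t : ℝ => t - f t * t) (star x * x) = star x * x - g * (star x * x) := by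
        rw [cfcₙ_sub (fun t => t) (fun t => f t * t) _ (by fun_prop) rfl (by fun_prop) (by simp),
          hft, cfcₙ_id' ℝ _ hsa]
      rw [cfcₙ_sub (fun t => t - f t * t) (fun t => (t - f t * t) * f t) _ (by fun_prop) (by simp)
        (by fun_prop) (by simp), cfcₙ_mul (fun t => t - f t * t) f _ (by fun_prop) (by simp)
        hfc.continuousOn hf0, hst]
      simp only [star_sub, star_mul, hgs, mul_sub, sub_mul, mul_assoc]
      abel
    refine nonneg_le_nonneg_of_sq_le_sq hr.le ?_
    rw [← CStarRing.norm_star_mul_self, hcalc]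
    refine norm_cfcₙ_le fun t _ => ?_
    have hs : t - f t * t - (t - f t * t) * f t = t * (r / max r √|t|) ^ 2 := by
      simp only [hf]; ring
    have hm : |t| ≤ (max r √|t|) ^ 2 := by
      rw [← Real.sqrt_le_left (hden t).le]
      exact le_max_right _ _
    rw [hs, Real.norm_eq_abs, abs_mul, abs_of_nonneg (sq_nonneg (r / max r √|t|)), div_pow,
      ← mul_div_assoc, div_le_iff₀ (pow_pos (hden t) 2)]
    nlinarith [sq_nonneg r]

lemma eventually_norm_sub_le_max (π : E →⋆ₙₐ[ℂ] B) {p : ℕ → E}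
    (hp : ∀ n, IsStarProjection (p n))
    (happrox : ∀ y, π y = 0 → Tendsto (fun n => ‖p n * y - y‖) atTop (𝓝 0))
    (hqc : ∀ x, Tendsto (fun n => ‖p n * x - x * p n‖) atTop (𝓝 0))
    (x : E) {ε : ℝ} (hε : 0 < ε) :
    ∀ᶠ n in atTop, ‖x‖ - ε ≤ max ‖p n * x * p n‖ ‖π x‖ := by
  obtain ⟨y, hy, hxy⟩ := π.exists_map_eq_zero_norm_sub_le x (r := ‖π x‖ + ε / 4)
    (by positivity) (by linarith)
  filter_upwards [(happrox y hy).eventually_le_const (show (0 : ℝ) < ε / 4 by positivity),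
    (hqc x).eventually_le_const (show (0 : ℝ) < ε / 4 by positivity)] with n h1 h2
  have h := (hp n).norm_le_max_corners_add x y
  have hm : max ‖p n * x * p n‖ (‖x - y‖ + ‖p n * y - y‖) ≤
      max ‖p n * x * p n‖ ‖π x‖ + ε / 2 := by
    refine max_le ?_ ?_
    · linarith [le_max_left ‖p n * x * p n‖ ‖π x‖]
    · linarith [le_max_right ‖p n * x * p n‖ ‖π x‖]
  linarith

end CStarAlgebra

section DirectSum

open ContinuousLinearMap
open scoped ComplexOrder

lemma exists_orthogonal_isometries (m₁ m₂ : ℕ) :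
    ∃ (m : ℕ) (V₁ : EuclideanSpace ℂ (Fin m₁) →L[ℂ] EuclideanSpace ℂ (Fin m))
      (V₂ : EuclideanSpace ℂ (Fin m₂) →L[ℂ] EuclideanSpace ℂ (Fin m)),
      adjoint V₁ ∘L V₁ = 1 ∧ adjoint V₂ ∘L V₂ = 1 ∧ adjoint V₁ ∘L V₂ = 0 := by
  let H := WithLp 2 (EuclideanSpace ℂ (Fin m₁) × EuclideanSpace ℂ (Fin m₂))
  let W := (stdOrthonormalBasis ℂ H).repr
  let e := (WithLp.linearEquiv 2 ℂ
    (EuclideanSpace ℂ (Fin m₁) × EuclideanSpace ℂ (Fin m₂))).symm.toLinearMap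
  let V₁ := (W.toLinearEquiv.toLinearMap ∘ₗ e ∘ₗ LinearMap.inl ℂ _ _).toContinuousLinearMap
  let V₂ := (W.toLinearEquiv.toLinearMap ∘ₗ e ∘ₗ LinearMap.inr ℂ _ _).toContinuousLinearMap
  have h₁ : ∀ x, V₁ x = W (WithLp.toLp 2 (x, 0)) := fun _ => rfl
  have h₂ : ∀ x, V₂ x = W (WithLp.toLp 2 (0, x)) := fun _ => rfl
  refine ⟨Module.finrank ℂ H, V₁, V₂, ?_, ?_, ?_⟩
  · rw [← inner_map_map_iff_adjoint_comp_self]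
    intro x y
    rw [h₁, h₁, W.inner_map_map, WithLp.prod_inner_apply]
    simp
  · rw [← inner_map_map_iff_adjoint_comp_self]
    intro x y
    rw [h₂, h₂, W.inner_map_map, WithLp.prod_inner_apply]
    simp
  · ext1 y
    refine ext_inner_left ℂ fun x => ?_
    rw [comp_apply, adjoint_inner_right, h₁, h₂, W.inner_map_map, WithLp.prod_inner_apply]
    simp

variable {A : Type*} [NonUnitalNormedRing A] [StarRing A] [Module ℂ A]

lemma IsCPIntoMat.sum_inner_nonneg {n : ℕ} {φ : A →ₗ[ℂ] MatOp n} (hφ : IsCPIntoMat φ) {k : ℕ}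
    (a : Fin k → A) (w : Fin k → EuclideanSpace ℂ (Fin n)) :
    0 ≤ ∑ i, ∑ j, inner ℂ (w i) (φ (star (a i) * a j) (w j)) := by
  rcases Nat.eq_zero_or_pos n with rfl | hn
  · simp [Subsingleton.elim (w _) 0]
  · let u : EuclideanSpace ℂ (Fin n) := EuclideanSpace.single ⟨0, hn⟩ 1
    have hu : ‖u‖ = 1 := by simp [u]
    have h := (hφ k a fun i => InnerProductSpace.rankOne ℂ (w i) u).inner_nonneg_right u
    simpa [star_eq_adjoint, sum_apply, inner_sum, hu, inner_smul_right] using h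

lemma isCPIntoMat_of_sum_inner_nonneg {n : ℕ} {φ : A →ₗ[ℂ] MatOp n}
    (h : ∀ (k : ℕ) (a : Fin k → A) (w : Fin k → EuclideanSpace ℂ (Fin n)),
      0 ≤ ∑ i, ∑ j, inner ℂ (w i) (φ (star (a i) * a j) (w j))) : IsCPIntoMat φ := by
  intro k a c
  rw [isPositive_iff_complex]
  intro x
  have hx : inner ℂ x ((∑ i, ∑ j, star (c i) * φ (star (a i) * a j) * c j) x) =
      ∑ i, ∑ j, inner ℂ (c i x) (φ (star (a i) * a j) (c j x)) := by
    simp [star_eq_adjoint, sum_apply, adjoint_inner_right]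
  have h0 := h k a fun i => c i x
  rw [← hx] at h0
  generalize (∑ i, ∑ j, star (c i) * φ (star (a i) * a j) * c j) x = z at h0 ⊢
  rw [← inner_conj_symm]
  generalize inner ℂ x z = w at h0 ⊢
  obtain ⟨hre, him⟩ := Complex.nonneg_iff.mp h0
  exact ⟨Complex.ext (by simp) (by simpa using him.symm), by simpa using hre⟩

lemma exists_directSum_isCPIntoMat {m₁ m₂ : ℕ} {φ₁ : A →ₗ[ℂ] MatOp m₁} {φ₂ : A →ₗ[ℂ] MatOp m₂}
    (h₁ : IsCPIntoMat φ₁) (h₂ : IsCPIntoMat φ₂) :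
    ∃ (m : ℕ) (ψ : A →ₗ[ℂ] MatOp m), IsCPIntoMat ψ ∧
      (∀ a, ‖ψ a‖ = max ‖φ₁ a‖ ‖φ₂ a‖) ∧
      ∀ a b, ‖ψ (a * b) - ψ a * ψ b‖ ≤
        max ‖φ₁ (a * b) - φ₁ a * φ₁ b‖ ‖φ₂ (a * b) - φ₂ a * φ₂ b‖ := by
  obtain ⟨m, V₁, V₂, h11, h22, h12⟩ := exists_orthogonal_isometries m₁ m₂
  have h21 : adjoint V₂ ∘L V₁ = 0 := by
    simpa [adjoint_comp] using congrArg adjoint h12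
  have n₁ : ‖V₁‖ ≤ 1 := opNorm_le_bound _ zero_le_one fun x => by
    rw [(norm_map_iff_adjoint_comp_self V₁).mpr h11, one_mul]
  have n₂ : ‖V₂‖ ≤ 1 := opNorm_le_bound _ zero_le_one fun x => by
    rw [(norm_map_iff_adjoint_comp_self V₂).mpr h22, one_mul]
  have e11 : ∀ x, adjoint V₁ (V₁ x) = x := fun x => congr($h11 x)
  have e22 : ∀ x, adjoint V₂ (V₂ x) = x := fun x => congr($h22 x)
  have e12 : ∀ x, adjoint V₁ (V₂ x) = 0 := fun x => congr($h12 x)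
  have e21 : ∀ x, adjoint V₂ (V₁ x) = 0 := fun x => congr($h21 x)
  let D : MatOp m₁ → MatOp m₂ → MatOp m := fun S T =>
    V₁ ∘L S ∘L adjoint V₁ + V₂ ∘L T ∘L adjoint V₂
  have norm_conj {l : ℕ} {V : EuclideanSpace ℂ (Fin l) →L[ℂ] EuclideanSpace ℂ (Fin m)}
      (hV : ‖V‖ ≤ 1) (S : MatOp l) : ‖V ∘L S ∘L adjoint V‖ ≤ ‖S‖ := by
    calc ‖V ∘L S ∘L adjoint V‖ ≤ ‖V‖ * (‖S‖ * ‖adjoint V‖) :=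
          (opNorm_comp_le _ _).trans (by gcongr; exact opNorm_comp_le _ _)
      _ ≤ 1 * (‖S‖ * 1) := by
          rw [LinearIsometryEquiv.norm_map]
          gcongr
      _ = ‖S‖ := by ring
  have norm_corner {l : ℕ} {V : EuclideanSpace ℂ (Fin l) →L[ℂ] EuclideanSpace ℂ (Fin m)}
      (hV : ‖V‖ ≤ 1) (T : MatOp m) : ‖adjoint V ∘L T ∘L V‖ ≤ ‖T‖ := by
    calc ‖adjoint V ∘L T ∘L V‖ ≤ ‖adjoint V‖ * (‖T‖ * ‖V‖) :=
          (opNorm_comp_le _ _).trans (by gcongr; exact opNorm_comp_le _ _)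
      _ ≤ 1 * (‖T‖ * 1) := by
          rw [LinearIsometryEquiv.norm_map]
          gcongr
      _ = ‖T‖ := by ring
  have D_le : ∀ S T, ‖D S T‖ ≤ max ‖S‖ ‖T‖ := fun S T => by
    refine (norm_add_le_max_of_orthogonal ?_ ?_).trans
      (max_le_max (norm_conj n₁ S) (norm_conj n₂ T))
    · ext1 x
      simp [star_eq_adjoint, adjoint_comp, e12]
    · ext1 x
      simp [star_eq_adjoint, adjoint_comp, e12]
  have le_D : ∀ S T, max ‖S‖ ‖T‖ ≤ ‖D S T‖ := fun S T => by
    have hS : adjoint V₁ ∘L D S T ∘L V₁ = S := by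
      ext1 x
      simp [D, e11, e21]
    have hT : adjoint V₂ ∘L D S T ∘L V₂ = T := by
      ext1 x
      simp [D, e22, e12]
    refine max_le ?_ ?_
    · conv_lhs => rw [← hS]
      exact norm_corner n₁ _
    · conv_lhs => rw [← hT]
      exact norm_corner n₂ _
  have D_mul : ∀ S T S' T', D S T * D S' T' = D (S * S') (T * T') := fun S T S' T' => by
    ext1 x
    simp [D, e11, e12, e21, e22]
  have D_sub : ∀ S T S' T', D S T - D S' T' = D (S - S') (T - T') := fun S T S' T' => by
    ext1 x
    simp [D]
    abel
  let ψ : A →ₗ[ℂ] MatOp m :=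
    { toFun := fun a => D (φ₁ a) (φ₂ a)
      map_add' := fun a b => by
        ext1 x
        simp [D]
        abel
      map_smul' := fun r a => by
        ext1 x
        simp [D] }
  have hψ : ∀ a, ψ a = D (φ₁ a) (φ₂ a) := fun _ => rfl
  refine ⟨m, ψ, isCPIntoMat_of_sum_inner_nonneg fun k a w => ?_, fun a => ?_, fun a b => ?_⟩
  · have h := add_nonneg (h₁.sum_inner_nonneg a fun i => adjoint V₁ (w i))
      (h₂.sum_inner_nonneg a fun i => adjoint V₂ (w i))
    simpa [hψ, D, inner_add_right, Finset.sum_add_distrib, adjoint_inner_left] using h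
  · exact le_antisymm (D_le _ _) (le_D _ _)
  · rw [hψ, hψ, hψ, D_mul, D_sub]
    exact D_le _ _

end DirectSum

lemma IsCPIntoMat.comp_of_star_mul {A C : Type*} [NonUnitalNormedRing A] [StarRing A] [Module ℂ A]
    [NonUnitalNormedRing C] [StarRing C] [Module ℂ C] {n : ℕ} {φ : A →ₗ[ℂ] MatOp n}
    (hφ : IsCPIntoMat φ) (κ : C →ₗ[ℂ] A) (ρ : C → A)
    (h : ∀ a b, κ (star a * b) = star (ρ a) * ρ b) : IsCPIntoMat (φ ∘ₗ κ) := by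
  intro k a c
  simpa [h] using hφ k (fun i => ρ (a i)) c

/-- If `0 → I → E → B → 0` is a quasidiagonal extension (the ideal `I` has an approximate
unit of projections quasicentral in `E`) and both `I` and `B` are quasidiagonal, then `E`
is quasidiagonal. -/
theorem vqd_of_quasidiagonal_extension {I E B : Type*}
    [NonUnitalCStarAlgebra I] [NonUnitalCStarAlgebra E] [NonUnitalCStarAlgebra B]
    (ι : I →⋆ₙₐ[ℂ] E) (hι : Isometry ι)
    (π : E →⋆ₙₐ[ℂ] B) (hπ : Function.Surjective π)
    (hexact : ∀ x : E, π x = 0 ↔ x ∈ Set.range ι)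
    (p : ℕ → E) (hpI : ∀ n, p n ∈ Set.range ι)
    (hproj : ∀ n, p n * p n = p n ∧ star (p n) = p n)
    (hmono : ∀ n, p n * p (n + 1) = p n)
    (happrox : ∀ x ∈ Set.range ι, Tendsto (fun n => ‖p n * x - x‖) atTop (𝓝 0))
    (hqc : ∀ x : E, Tendsto (fun n => ‖p n * x - x * p n‖) atTop (𝓝 0))
    (hI : VQD I) (hB : VQD B) : VQD E := by
  classical
  intro F ε hε
  have hp : ∀ n, IsStarProjection (p n) := fun n => ⟨(hproj n).1, (hproj n).2⟩
  have hnorm : ∀ᶠ n in atTop, ∀ x ∈ F, ‖x‖ - ε / 2 ≤ max ‖p n * x * p n‖ ‖π x‖ :=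
    (eventually_all_finset F).mpr fun x _ => eventually_norm_sub_le_max π hp
      (fun y hy => happrox y ((hexact y).mp hy)) hqc x (half_pos hε)
  have hmul : ∀ᶠ n in atTop, ∀ x ∈ F, ∀ y ∈ F, ‖x‖ * ‖p n * y - y * p n‖ ≤ ε / 2 := by
    refine (eventually_all_finset F).mpr fun x _ => (eventually_all_finset F).mpr fun y _ => ?_
    have h := (hqc y).const_mul ‖x‖
    rw [mul_zero] at h
    exact h.eventually_le_const (half_pos hε)
  obtain ⟨n, hn, hn'⟩ := (hnorm.and hmul).exists
  have hπp : π (p n) = 0 := (hexact _).mpr (hpI n)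
  have hρ : ∀ x, ∃ i, ι i = x * p n := fun x => (hexact _).mp (by rw [map_mul, hπp, mul_zero])
  have hκ : ∀ x, ∃ i, ι i = p n * x * p n := fun x =>
    (hexact _).mp (by rw [map_mul, hπp, mul_zero])
  choose ρ hρ using hρ
  choose κ hκ using hκ
  have hιn : ∀ i, ‖ι i‖ = ‖i‖ := fun i => hι.norm_map_of_map_zero (map_zero ι) i
  let κₗ : E →ₗ[ℂ] I :=
    { toFun := κ
      map_add' := fun x y => hι.injective (by simp [hκ, mul_add, add_mul])
      map_smul' := fun c x => hι.injective (by
        simp only [hκ, map_smul, RingHom.id_apply, mul_smul_comm, smul_mul_assoc]) }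
  have hκρ : ∀ a b, κₗ (star a * b) = star (ρ a) * ρ b := fun a b => hι.injective <| by
    change ι (κ _) = _
    rw [hκ, map_mul, map_star, hρ, hρ, star_mul, (hproj n).2]
    simp only [mul_assoc]
  have hκmul : ∀ x y, ‖κ (x * y) - κ x * κ y‖ ≤ ‖x‖ * ‖p n * y - y * p n‖ := fun x y => by
    rw [← hιn, map_sub, map_mul, hκ, hκ, hκ]
    exact (hp n).norm_compress_mul_sub_le x y
  obtain ⟨m₁, -, φ₁, -, hc₁, hcp₁, hi₁, hm₁⟩ := hI (F.image κ) (ε / 2) (half_pos hε)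
  obtain ⟨m₂, -, φ₂, -, hc₂, hcp₂, hi₂, hm₂⟩ := hB (F.image π) (ε / 2) (half_pos hε)
  let πₗ : E →ₗ[ℂ] B :=
    { toFun := π
      map_add' := map_add π
      map_smul' := map_smul π }
  obtain ⟨m, ψ, hcp, hψ, hψm⟩ := exists_directSum_isCPIntoMat
    (hcp₁.comp_of_star_mul κₗ ρ hκρ)
    (hcp₂.comp_of_star_mul πₗ π fun a b => by
      change π _ = _
      rw [map_mul, map_star])
  refine ⟨m, ⊤, ψ, fun _ => trivial, fun a => ?_, hcp, fun x hx => ?_, fun x hx y hy => ?_⟩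
  · rw [hψ]
    refine max_le ((hc₁ _).trans ?_) ((hc₂ _).trans (NonUnitalStarAlgHom.norm_apply_le π a))
    change ‖κ a‖ ≤ ‖a‖
    rw [← hιn, hκ]
    exact (hp n).norm_mul_mul_le a
  · have h₁ : ‖κ x‖ - ε / 2 ≤ ‖φ₁ (κ x)‖ := hi₁ _ (Finset.mem_image_of_mem κ hx)
    have h₂ : ‖π x‖ - ε / 2 ≤ ‖φ₂ (π x)‖ := hi₂ _ (Finset.mem_image_of_mem π hx)
    have h := hn x hx
    rw [← hκ, hιn] at h
    change _ ≤ ‖ψ x‖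
    rw [hψ]
    change _ ≤ max ‖φ₁ (κ x)‖ ‖φ₂ (π x)‖
    rcases le_max_iff.mp h with h | h
    · exact le_max_of_le_left (by linarith)
    · exact le_max_of_le_right (by linarith)
  · refine (hψm x y).trans (max_le ?_ ?_)
    · have h₁ : ‖φ₁ (κ x * κ y) - φ₁ (κ x) * φ₁ (κ y)‖ ≤ ε / 2 :=
        hm₁ _ (Finset.mem_image_of_mem κ hx) _ (Finset.mem_image_of_mem κ hy)
      have h₂ : ‖φ₁ (κ (x * y) - κ x * κ y)‖ ≤ ε / 2 :=
        (hc₁ _).trans ((hκmul x y).trans (hn' x hx y hy))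
      rw [map_sub] at h₂
      change ‖φ₁ (κ (x * y)) - φ₁ (κ x) * φ₁ (κ y)‖ ≤ ε
      linarith [norm_sub_le_norm_sub_add_norm_sub (φ₁ (κ (x * y))) (φ₁ (κ x * κ y))
        (φ₁ (κ x) * φ₁ (κ y))]
    · have h := hm₂ _ (Finset.mem_image_of_mem π hx) _ (Finset.mem_image_of_mem π hy)
      rw [← map_mul] at h
      exact h.trans (by linarith)
end

section
/- Let A be a simple unital C*-algebra such that for every finite set F ⊂ A and ε > 0 there exists a nonzero finite dimensional subalgebra B ⊂ A with unit P = 1_B satisfying ‖[a,P]‖ ≤ ε for all a ∈ F and PaP within ε of an element of B for all a ∈ F. Then A is quasidiagonal: for every finite set F and ε > 0 there is a unital completely positive map φ into a finite dimensional C*-algebra which is ε-multiplicative and ε-isometric on F. -/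
open Filter Topology

open scoped ComplexOrder

universe u

/-- Every nontrivial unital C⋆-algebra has a state. -/
theorem exists_positiveLinearMap_map_one_eq_one {A : Type*} [CStarAlgebra A] [PartialOrder A]
    [StarOrderedRing A] [Nontrivial A] : ∃ f : A →ₚ[ℂ] ℂ, f 1 = 1 := by
  let s : PointedCone ℝ A :=
    { carrier := {a | 0 ≤ a + star a}
      add_mem' := fun {a b} ha hb => by
        have : a + b + star (a + b) = (a + star a) + (b + star b) := by rw [star_add]; abel
        rw [Set.mem_ofPred_eq, this]
        exact add_nonneg ha hb
      zero_mem' := by simp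
      smul_mem' := fun c a ha => by
        have : c • a + star (c • a) = (c : ℝ) • (a + star a) := by
          change (c : ℝ) • a + star ((c : ℝ) • a) = _
          rw [star_smul, star_trivial, smul_add]
        rw [Set.mem_ofPred_eq, this]
        exact smul_nonneg c.2 ha }
  have mem_s (a : A) : a ∈ s ↔ 0 ≤ a + star a := Iff.rfl
  have one_apply (c : ℝ) (hc : c • (1 : A) ∈ Submodule.span ℝ {(1 : A)}) :
      LinearPMap.mkSpanSingleton (σ := RingHom.id ℝ) (1 : A) (1 : ℝ) one_ne_zero ⟨c • 1, hc⟩ =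
        c := by
    refine (LinearPMap.mkSpanSingleton'_apply _ _ _ c hc).trans ?_
    simp
  obtain ⟨g, hg, hgs⟩ := riesz_extension s (LinearPMap.mkSpanSingleton (1 : A) (1 : ℝ) one_ne_zero)
    (by
      rintro ⟨x, hx⟩ hxs
      obtain ⟨c, rfl⟩ := Submodule.mem_span_singleton.1 hx
      refine (one_apply c hx).ge.trans' ?_
      have h : 0 ≤ c • (1 : A) + star (c • (1 : A)) := hxs
      by_contra! hc
      have h2 : c • (1 : A) + star (c • (1 : A)) = (2 * c) • 1 := by
        rw [star_smul, star_one, star_trivial, ← add_smul, two_mul]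
      have h3 : (2 * c) • (1 : A) ≤ 0 := smul_nonpos_of_nonpos_of_nonneg (by linarith) zero_le_one
      have h4 : (2 * c) • (1 : A) = 0 := le_antisymm h3 (h2 ▸ h)
      simp [hc.ne] at h4)
    (by
      intro y
      refine ⟨⟨‖y + star y‖ • (1 : A), Submodule.mem_span_singleton.2 ⟨_, rfl⟩⟩, ?_⟩
      rw [mem_s]
      have h1 := IsSelfAdjoint.neg_algebraMap_norm_le_self (IsSelfAdjoint.add_star_self y)
      rw [Algebra.algebraMap_eq_smul_one] at h1
      have h2 : (0 : A) ≤ ‖y + star y‖ • (1 : A) := smul_nonneg (norm_nonneg _) zero_le_one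
      have h3 := add_nonneg h2 (neg_le_iff_add_nonneg.1 h1)
      have h4 : star (‖y + star y‖ • (1 : A)) = ‖y + star y‖ • 1 := by
        rw [star_smul, star_one, star_trivial ‖y + star y‖]
      rw [star_add, h4]
      convert h3 using 1
      abel)
  have hg1 : g 1 = 1 := by
    have h1 : (1 : ℝ) • (1 : A) ∈ Submodule.span ℝ {(1 : A)} :=
      Submodule.mem_span_singleton.2 ⟨1, rfl⟩
    have h2 : g ((1 : ℝ) • 1) = 1 := (hg ⟨(1 : ℝ) • 1, h1⟩).trans (one_apply 1 h1)
    rwa [one_smul] at h2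
  have key (a : A) (ha : 0 ≤ a) : g (Complex.I • a) = 0 := by
    have hsa : star a = a := (IsSelfAdjoint.of_nonneg ha).star_eq
    refine le_antisymm ?_ ?_
    · have := hgs (-(Complex.I • a)) (by simp [mem_s, hsa])
      simpa using this
    · exact hgs (Complex.I • a) (by simp [mem_s, hsa])
  refine ⟨PositiveLinearMap.mk₀ (Module.Dual.extendRCLike g) fun a ha => ?_, ?_⟩
  · have : 0 ≤ g a := hgs a ((mem_s a).2 (add_nonneg ha (star_nonneg_iff.2 ha)))
    rw [Module.Dual.extendRCLike_apply]
    simpa [key a ha] using this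
  · have := key 1 zero_le_one
    change Module.Dual.extendRCLike g 1 = (1 : ℂ)
    rw [Module.Dual.extendRCLike_apply]
    simp [this, hg1]

/-- A nontrivial C⋆-algebra without proper closed two-sided ideals has a faithful representation
on a Hilbert space. -/
theorem exists_injective_starAlgHom {A : Type u} [CStarAlgebra A] [Nontrivial A]
    (hsimple : ∀ J : TwoSidedIdeal A, IsClosed (J : Set A) → J = ⊥ ∨ J = ⊤) :
    ∃ (H : Type u) (_ : NormedAddCommGroup H) (_ : InnerProductSpace ℂ H) (_ : CompleteSpace H)
      (π : A →⋆ₐ[ℂ] (H →L[ℂ] H)), Function.Injective π := by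
  let _ : PartialOrder A := CStarAlgebra.spectralOrder A
  have _ : StarOrderedRing A := CStarAlgebra.spectralOrderedRing A
  obtain ⟨f, hf⟩ := exists_positiveLinearMap_map_one_eq_one (A := A)
  refine ⟨f.GNS, inferInstance, inferInstance, inferInstance, f.gnsStarAlgHom, ?_⟩
  have hcont : Continuous f.gnsStarAlgHom :=
    AddMonoidHomClass.continuous_of_bound f.gnsStarAlgHom 1 fun a => by
      simpa using NonUnitalStarAlgHom.norm_apply_le f.gnsStarAlgHom a
  have hclosed : IsClosed (TwoSidedIdeal.ker f.gnsStarAlgHom : Set A) := by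
    have : (TwoSidedIdeal.ker f.gnsStarAlgHom : Set A) = f.gnsStarAlgHom ⁻¹' {0} := by
      ext x
      simp [TwoSidedIdeal.mem_ker]
    rw [this]
    exact isClosed_singleton.preimage hcont
  rw [← TwoSidedIdeal.ker_eq_bot]
  refine (hsimple _ hclosed).resolve_right fun htop => ?_
  have h1 : (1 : A) ∈ TwoSidedIdeal.ker f.gnsStarAlgHom := htop ▸ trivial
  rw [TwoSidedIdeal.mem_ker, map_one] at h1
  have h2 : ((f.toPreGNS 1 : f.PreGNS) : f.GNS) = 0 := by
    simpa using DFunLike.congr_fun h1 ((f.toPreGNS 1 : f.PreGNS) : f.GNS)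
  have h3 : ‖f.toPreGNS 1‖ = 0 := by
    rw [← UniformSpace.Completion.norm_coe, h2, norm_zero]
  have h4 := f.preGNS_norm_sq (f.toPreGNS 1)
  rw [h3] at h4
  simp [hf] at h4

/-- A finite dimensional subspace of a Hilbert space is the range of an isometry
defined on some `ℂⁿ`. -/
theorem exists_linearIsometry_range_eq {H : Type*} [NormedAddCommGroup H] [InnerProductSpace ℂ H]
    (K : Submodule ℂ H) [FiniteDimensional ℂ K] :
    ∃ (n : ℕ) (V : EuclideanSpace ℂ (Fin n) →ₗᵢ[ℂ] H), LinearMap.range V.toLinearMap = K := by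
  refine ⟨_, K.subtypeₗᵢ.comp (stdOrthonormalBasis ℂ K).repr.symm.toLinearIsometry, ?_⟩
  ext v
  constructor
  · rintro ⟨w, rfl⟩
    simp
  · intro hv
    exact ⟨(stdOrthonormalBasis ℂ K).repr ⟨v, hv⟩, by simp⟩

section Compression

open ContinuousLinearMap

variable {A H : Type*} [CStarAlgebra A] [NormedAddCommGroup H] [InnerProductSpace ℂ H]
  [CompleteSpace H] {n : ℕ}

/-- The compression `a ↦ V⋆ π(a) V` of a representation `π` to `ℂⁿ` along an isometry `V`. -/
noncomputable def compression (π : A →⋆ₐ[ℂ] (H →L[ℂ] H))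
    (V : EuclideanSpace ℂ (Fin n) →ₗᵢ[ℂ] H) : A →ₗ[ℂ] MatOp n where
  toFun a := adjoint V.toContinuousLinearMap ∘L π a ∘L V.toContinuousLinearMap
  map_add' a b := by simp
  map_smul' c a := by simp

variable (π : A →⋆ₐ[ℂ] (H →L[ℂ] H)) (V : EuclideanSpace ℂ (Fin n) →ₗᵢ[ℂ] H)

theorem compression_def (a : A) : compression π V a =
    adjoint V.toContinuousLinearMap ∘L π a ∘L V.toContinuousLinearMap := rfl

theorem compression_one : compression π V 1 = 1 := by
  rw [compression_def, map_one, one_def, id_comp]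
  exact V.adjoint_comp_self

theorem compression_star (a : A) : compression π V (star a) = star (compression π V a) := by
  rw [compression_def, compression_def, map_star, star_eq_adjoint, star_eq_adjoint, adjoint_comp,
    adjoint_comp, adjoint_adjoint]
  rfl

theorem norm_compression_le (a : A) : ‖compression π V a‖ ≤ ‖a‖ := by
  have hV : ‖V.toContinuousLinearMap‖ ≤ 1 := V.norm_toContinuousLinearMap_le
  have hV' : ‖adjoint V.toContinuousLinearMap‖ ≤ 1 := by
    rwa [LinearIsometryEquiv.norm_map]
  have hπ : ‖π a‖ ≤ ‖a‖ := NonUnitalStarAlgHom.norm_apply_le π a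
  calc ‖compression π V a‖
      ≤ ‖adjoint V.toContinuousLinearMap‖ * (‖π a‖ * ‖V.toContinuousLinearMap‖) :=
        (opNorm_comp_le _ _).trans (by gcongr; exact opNorm_comp_le _ _)
    _ ≤ 1 * (‖a‖ * 1) := by gcongr
    _ = ‖a‖ := by ring

theorem isCPIntoMat_compression : IsCPIntoMat (compression π V) := by
  intro k a c
  have key : ∑ i, ∑ j, star (c i) * compression π V (star (a i) * a j) * c j =
      adjoint (∑ i, π (a i) ∘L V.toContinuousLinearMap ∘L c i) ∘L
        (∑ i, π (a i) ∘L V.toContinuousLinearMap ∘L c i) := by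
    rw [map_sum, finsetSum_comp]
    refine Finset.sum_congr rfl fun i _ => ?_
    rw [comp_finsetSum]
    refine Finset.sum_congr rfl fun j _ => ?_
    rw [compression_def, map_mul, map_star, star_eq_adjoint, star_eq_adjoint, adjoint_comp,
      adjoint_comp]
    rfl
  rw [key]
  exact isPositive_adjoint_comp_self _

/-- The compression is right multiplicative on elements that leave the range of `V` invariant. -/
theorem compression_mul_of_mapsTo {b : A}
    (hb : ∀ v, π b (V v) ∈ LinearMap.range V.toLinearMap) (a : A) :
    compression π V (a * b) = compression π V a * compression π V b := by
  ext1 v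
  obtain ⟨w, hw⟩ := hb v
  have hw' : π b (V v) = V.toContinuousLinearMap w := hw.symm
  have hVV : adjoint V.toContinuousLinearMap (V.toContinuousLinearMap w) = w :=
    DFunLike.congr_fun V.adjoint_comp_self w
  simp only [compression_def, map_mul, mul_apply_eq_comp, comp_apply,
    LinearIsometry.coe_toContinuousLinearMap, hw'] at hVV ⊢
  rw [hVV]

end Compression

/-- Popa's local approximation property yields approximately multiplicative unital completely
positive maps into nonzero matrix algebras. -/
theorem exists_approx_mul_of_local {A : Type u} [CStarAlgebra A]
    (hsimple : ∀ J : TwoSidedIdeal A, IsClosed (J : Set A) → J = ⊥ ∨ J = ⊤)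
    (hloc : ∀ (F : Finset A) (ε : ℝ), 0 < ε →
      ∃ (S : NonUnitalStarSubalgebra ℂ A) (P : A),
        FiniteDimensional ℂ S ∧ S ≠ ⊥ ∧
        P ∈ S ∧ P ≠ 0 ∧ P * P = P ∧ star P = P ∧
        (∀ b ∈ S, P * b = b ∧ b * P = b) ∧
        (∀ a ∈ F, ‖a * P - P * a‖ ≤ ε) ∧
        ∀ a ∈ F, ∃ b ∈ S, ‖P * a * P - b‖ ≤ ε)
    (F : Finset A) (ε : ℝ) (hε : 0 < ε) :
    ∃ (n : ℕ) (φ : A →ₗ[ℂ] MatOp n),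
      0 < n ∧ φ 1 = 1 ∧ IsCPIntoMat φ ∧ (∀ x, φ (star x) = star (φ x)) ∧ (∀ x, ‖φ x‖ ≤ ‖x‖) ∧
      ∀ x ∈ F, ∀ y ∈ F, ‖φ (x * y) - φ x * φ y‖ ≤ ε := by
  set M : ℝ := ∑ x ∈ F, ‖x‖ with hM
  have hM0 : 0 ≤ M := Finset.sum_nonneg fun x _ => norm_nonneg x
  set δ : ℝ := ε / (4 * (M + 1)) with hδ
  have hδ0 : 0 < δ := by positivity
  obtain ⟨S, P, hfin, -, hPS, hP0, -, -, hPb, hcomm, hdist⟩ := hloc F δ hδ0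
  have : Nontrivial A := ⟨P, 0, hP0⟩
  obtain ⟨H, _, _, _, π, hπ⟩ := exists_injective_starAlgHom hsimple
  obtain ⟨ξ, hξ⟩ : ∃ ξ, π P ξ ≠ 0 := by
    by_contra! hcon
    exact hP0 (hπ (by rw [map_zero]; ext ξ; simp [hcon]))
  let T : S →ₗ[ℂ] H :=
    { toFun := fun b => π b ξ
      map_add' := fun b c => by simp
      map_smul' := fun c b => by simp }
  obtain ⟨n, V, hV⟩ := exists_linearIsometry_range_eq (LinearMap.range T)
  have hVmem (v) : ∃ b ∈ S, π b ξ = V v := by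
    have : V v ∈ LinearMap.range T := hV ▸ ⟨v, rfl⟩
    obtain ⟨b, hb⟩ := this
    exact ⟨b, b.2, hb⟩
  have hPV (v) : π P (V v) = V v := by
    obtain ⟨b, hb, hbv⟩ := hVmem v
    rw [← hbv, ← mul_apply_eq_comp, ← map_mul, (hPb b hb).1]
  have hSV (c : A) (hc : c ∈ S) (v) : π c (V v) ∈ LinearMap.range V.toLinearMap := by
    obtain ⟨b, hb, hbv⟩ := hVmem v
    rw [hV, ← hbv, ← mul_apply_eq_comp, ← map_mul]
    exact ⟨⟨c * b, mul_mem hc hb⟩, rfl⟩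
  refine ⟨n, compression π V, ?_, compression_one π V, isCPIntoMat_compression π V,
    compression_star π V, norm_compression_le π V, fun x hx y hy => ?_⟩
  · rw [Nat.pos_iff_ne_zero]
    rintro rfl
    have : π P ξ ∈ LinearMap.range V.toLinearMap := hV ▸ ⟨⟨P, hPS⟩, rfl⟩
    obtain ⟨v, hv⟩ := this
    rw [Subsingleton.elim v 0, map_zero] at hv
    exact hξ hv.symm
  · obtain ⟨b, hb, hyb⟩ := hdist y hy
    set d := (y * P - P * y) + (P * y * P - b) with hd
    have hdnorm : ‖d‖ ≤ 2 * δ := (norm_add_le _ _).trans (by linarith [hcomm y hy])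
    have hyV (z : A) : compression π V (z * y) =
        compression π V (z * d) + compression π V (z * b) := by
      rw [← map_add, ← mul_add]
      ext1 v
      have : π y (V v) = π (d + b) (V v) := by
        simp [hd, hPV]
      simp [compression_def, this]
    have hy1 : compression π V y = compression π V d + compression π V b := by
      simpa using hyV 1
    have heq : compression π V (x * y) - compression π V x * compression π V y =
        compression π V (x * d) - compression π V x * compression π V d := by
      rw [hyV, hy1, compression_mul_of_mapsTo π V (hSV b hb)]
      noncomm_ring
    have hxM : ‖x‖ ≤ M := Finset.single_le_sum (fun z _ => norm_nonneg z) hx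
    calc ‖compression π V (x * y) - compression π V x * compression π V y‖
        ≤ ‖compression π V (x * d)‖ + ‖compression π V x * compression π V d‖ :=
          heq ▸ norm_sub_le _ _
      _ ≤ ‖x‖ * ‖d‖ + ‖x‖ * ‖d‖ := by
          gcongr
          · exact (norm_compression_le π V _).trans (norm_mul_le _ _)
          · refine (norm_mul_le _ _).trans ?_
            gcongr <;> exact norm_compression_le π V _
      _ = 2 * (‖x‖ * ‖d‖) := by ring
      _ ≤ 2 * ((M + 1) * (2 * δ)) := by gcongr; linarith
      _ = ε := by rw [hδ]; field_simp; norm_num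

/-- On a C⋆-algebra without proper closed two-sided ideals, the norm is the only nonzero
C⋆-seminorm which is contractive and monotone on positive elements. -/
theorem Seminorm.eq_norm_of_cstar {A : Type*} [CStarAlgebra A] [PartialOrder A]
    [StarOrderedRing A]
    (hsimple : ∀ J : TwoSidedIdeal A, IsClosed (J : Set A) → J = ⊥ ∨ J = ⊤)
    (p : Seminorm ℂ A) (hle : ∀ a, p a ≤ ‖a‖) (hone : p 1 ≠ 0)
    (hmul : ∀ a b, p (a * b) ≤ p a * p b) (hstar : ∀ a, p (star a * a) = p a ^ 2)
    (hmono : ∀ a b, 0 ≤ a → a ≤ b → p a ≤ p b) (x : A) : p x = ‖x‖ := by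
  have hcont : Continuous p := Seminorm.continuous_of_le (q := normSeminorm ℂ A)
    (by exact continuous_norm) hle
  have hzero (a : A) (ha : p a = 0) : a = 0 := by
    let J : TwoSidedIdeal A := TwoSidedIdeal.mk' {a | p a = 0} (map_zero p)
      (fun {a b} ha hb => le_antisymm ((map_add_le_add p a b).trans (by
        rw [Set.mem_ofPred_eq] at ha hb; simp [ha, hb])) (apply_nonneg p _))
      (fun {a} ha => by rwa [Set.mem_ofPred_eq, map_neg_eq_map])
      (fun {a b} hb => le_antisymm ((hmul a b).trans (by
        rw [Set.mem_ofPred_eq] at hb; simp [hb])) (apply_nonneg p _))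
      (fun {a b} ha => le_antisymm ((hmul a b).trans (by
        rw [Set.mem_ofPred_eq] at ha; simp [ha])) (apply_nonneg p _))
    have mem_J (a : A) : a ∈ J ↔ p a = 0 := by
      rw [TwoSidedIdeal.mem_mk', Set.mem_ofPred_eq]
    have hJ : (J : Set A) = p ⁻¹' {0} := by
      ext a
      simp [mem_J]
    have hbot : J = ⊥ := (hsimple J (hJ ▸ isClosed_singleton.preimage hcont)).resolve_right
      fun htop => hone ((mem_J 1).1 (htop ▸ trivial))
    have : a ∈ J := (mem_J a).2 ha
    rwa [hbot, TwoSidedIdeal.mem_bot] at this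
  have hpos (h : A) (hh : 0 ≤ h) : ‖h‖ ≤ p h := by
    refine le_of_forall_gt_imp_ge_of_dense fun s hs => ?_
    have hs0 : 0 ≤ s := (apply_nonneg p h).trans hs.le
    have hsa : IsSelfAdjoint (h - algebraMap ℝ A s) :=
      (IsSelfAdjoint.of_nonneg hh).sub (.algebraMap A (.all s))
    set k := (h - algebraMap ℝ A s)⁺ with hk
    have hk0 : 0 ≤ k := CFC.posPart_nonneg _
    have hkstar : star k = k := (IsSelfAdjoint.of_nonneg hk0).star_eq
    have hkk : k * k = star k * k := by rw [hkstar]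
    have hkhk : k * h * k - (s : ℂ) • (k * k) = k * k * k := by
      have h1 := CFC.posPart_sub_negPart (h - algebraMap ℝ A s) hsa
      have h2 := CFC.posPart_mul_negPart (h - algebraMap ℝ A s)
      have h3 : h = k - (h - algebraMap ℝ A s)⁻ + (s : ℂ) • 1 := by
        rw [h1, Algebra.algebraMap_eq_smul_one, Complex.coe_smul]; abel
      conv_lhs => rw [h3]
      rw [mul_add, mul_sub, h2]
      simp [add_mul]
    have hle' : (s : ℂ) • (k * k) ≤ k * h * k := by
      rw [← sub_nonneg, hkhk]
      simpa [hkstar] using star_left_conjugate_nonneg hk0 k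
    have hnonneg : 0 ≤ (s : ℂ) • (k * k) := by
      rw [Complex.coe_smul, hkk]
      exact smul_nonneg hs0 (star_mul_self_nonneg k)
    have h1 := hmono _ _ hnonneg hle'
    rw [map_smul_eq_mul, hkk, hstar, Complex.norm_real, Real.norm_of_nonneg hs0] at h1
    have h2 : p (k * h * k) ≤ p k * p h * p k :=
      (hmul _ _).trans (mul_le_mul_of_nonneg_right (hmul _ _) (apply_nonneg p _))
    have hpk : p k ^ 2 ≤ 0 := by
      by_contra! hcon
      nlinarith
    have hkz : k = 0 := hzero k (pow_eq_zero_iff two_ne_zero |>.1 (hpk.antisymm (sq_nonneg _)))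
    rw [CStarAlgebra.norm_le_iff_le_algebraMap h hs0 hh, ← sub_nonpos]
    exact CFC.posPart_eq_zero_iff _ hsa |>.1 hkz
  refine le_antisymm (hle x) ?_
  have := hpos (star x * x) (star_mul_self_nonneg x)
  rw [hstar, CStarRing.norm_star_mul_self, ← sq] at this
  exact (sq_le_sq₀ (norm_nonneg _) (apply_nonneg p x)).1 this

theorem IsCPIntoMat.map_nonneg {A : Type*} [CStarAlgebra A] [PartialOrder A] [StarOrderedRing A]
    {n : ℕ} {φ : A →ₗ[ℂ] MatOp n} (hφ : IsCPIntoMat φ) {a : A} (ha : 0 ≤ a) : 0 ≤ φ a := by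
  obtain ⟨b, rfl⟩ := CStarAlgebra.nonneg_iff_eq_star_mul_self.1 ha
  rw [ContinuousLinearMap.nonneg_iff_isPositive]
  simpa using hφ 1 (fun _ => b) (fun _ => 1)

/-- Along an ultrafilter, norms of asymptotically multiplicative unital completely positive maps
on a C⋆-algebra without proper closed two-sided ideals converge to the norm. -/
theorem tendsto_norm_of_asymptotically_mul {A ι : Type*} [CStarAlgebra A]
    (hsimple : ∀ J : TwoSidedIdeal A, IsClosed (J : Set A) → J = ⊥ ∨ J = ⊤)
    (U : Ultrafilter ι) (n : ι → ℕ) (φ : ∀ i, A →ₗ[ℂ] MatOp (n i)) (hn : ∀ i, 0 < n i)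
    (hone : ∀ i, φ i 1 = 1) (hcp : ∀ i, IsCPIntoMat (φ i))
    (hstar : ∀ i x, φ i (star x) = star (φ i x)) (hle : ∀ i x, ‖φ i x‖ ≤ ‖x‖)
    (hmul : ∀ x y, Tendsto (fun i => ‖φ i (x * y) - φ i x * φ i y‖) U (𝓝 0)) (x : A) :
    Tendsto (fun i => ‖φ i x‖) U (𝓝 ‖x‖) := by
  let _ : PartialOrder A := CStarAlgebra.spectralOrder A
  have _ : StarOrderedRing A := CStarAlgebra.spectralOrderedRing A
  have hlim (a : A) : ∃ r, Tendsto (fun i => ‖φ i a‖) U (𝓝 r) := by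
    obtain ⟨r, -, hr⟩ := (isCompact_Icc (a := (0 : ℝ)) (b := ‖a‖)).ultrafilter_le_nhds
      (U.map fun i => ‖φ i a‖) (by
        rw [le_principal_iff, Ultrafilter.coe_map, mem_map]
        exact Eventually.of_forall fun i => ⟨norm_nonneg _, hle i a⟩)
    exact ⟨r, hr⟩
  choose q hq using hlim
  let p : Seminorm ℂ A := Seminorm.of q
    (fun a b => le_of_tendsto_of_tendsto' (hq (a + b)) ((hq a).add (hq b)) fun i => by
      rw [map_add]
      exact norm_add_le _ _)
    (fun c a => tendsto_nhds_unique (hq (c • a)) (by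
      simpa only [map_smul, norm_smul] using (hq a).const_mul ‖c‖))
  have hp (a : A) : Tendsto (fun i => ‖φ i a‖) U (𝓝 (p a)) := hq a
  suffices h : p x = ‖x‖ from h ▸ hp x
  refine Seminorm.eq_norm_of_cstar hsimple p (fun a => ?_) ?_ (fun a b => ?_) (fun a => ?_)
    (fun a b ha hab => ?_) x
  · exact le_of_tendsto' (hp a) fun i => hle i a
  · have h1 : p 1 = 1 := tendsto_nhds_unique (hp 1) (by
      refine tendsto_const_nhds.congr fun i => ?_
      have : Nonempty (Fin (n i)) := ⟨⟨0, hn i⟩⟩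
      rw [hone, norm_one])
    rw [h1]
    exact one_ne_zero
  · have h1 := (hmul a b).add ((hp a).mul (hp b))
    rw [zero_add] at h1
    refine le_of_tendsto_of_tendsto' (hp (a * b)) h1 fun i => ?_
    calc ‖φ i (a * b)‖ = ‖(φ i (a * b) - φ i a * φ i b) + φ i a * φ i b‖ := by
          rw [sub_add_cancel]
      _ ≤ _ := (norm_add_le _ _).trans (by gcongr; exact norm_mul_le _ _)
  · have h1 : Tendsto (fun i => ‖φ i (star a * a)‖ - ‖φ i a‖ ^ 2) U (𝓝 0) := by
      refine squeeze_zero_norm (fun i => ?_) (hmul (star a) a)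
      rw [sq, ← CStarRing.norm_star_mul_self, hstar]
      exact abs_norm_sub_norm_le _ _
    exact sub_eq_zero.1 (tendsto_nhds_unique ((hp (star a * a)).sub ((hp a).pow 2)) h1)
  · refine le_of_tendsto_of_tendsto' (hp a) (hp b) fun i => ?_
    refine CStarAlgebra.norm_le_norm_of_nonneg_of_le ((hcp i).map_nonneg ha) ?_
    rw [← sub_nonneg, ← map_sub]
    exact (hcp i).map_nonneg (sub_nonneg.2 hab)

/-- (Easy direction of Popa's theorem.)  Let `A` be a simple unital `C*`-algebra such that
for every finite `F ⊆ A` and `ε > 0` there is a nonzero finite dimensional subalgebra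
`S ⊆ A` with unit `P` satisfying `‖[a,P]‖ ≤ ε` and `dist(P a P, S) ≤ ε` for `a ∈ F`.
Then `A` is quasidiagonal: for every finite `F` and `ε > 0` there is a unital completely
positive map into a matrix algebra which is `ε`-multiplicative and `ε`-isometric on `F`. -/
theorem popa_local_implies_quasidiagonal {A : Type*} [CStarAlgebra A]
    (hsimple : ∀ J : TwoSidedIdeal A, IsClosed (J : Set A) → J = ⊥ ∨ J = ⊤)
    (hloc : ∀ (F : Finset A) (ε : ℝ), 0 < ε →
      ∃ (S : NonUnitalStarSubalgebra ℂ A) (P : A),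
        FiniteDimensional ℂ S ∧ S ≠ ⊥ ∧
        P ∈ S ∧ P ≠ 0 ∧ P * P = P ∧ star P = P ∧
        (∀ b ∈ S, P * b = b ∧ b * P = b) ∧
        (∀ a ∈ F, ‖a * P - P * a‖ ≤ ε) ∧
        ∀ a ∈ F, ∃ b ∈ S, ‖P * a * P - b‖ ≤ ε) :
    ∀ (F : Finset A) (ε : ℝ), 0 < ε →
      ∃ (n : ℕ) (φ : A →ₗ[ℂ] MatOp n),
        φ 1 = 1 ∧ IsCPIntoMat φ ∧
        (∀ x ∈ F, ‖x‖ - ε ≤ ‖φ x‖) ∧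
        ∀ x ∈ F, ∀ y ∈ F, ‖φ (x * y) - φ x * φ y‖ ≤ ε := by
  classical
  intro F ε hε
  choose n φ hn hone hcp hstar hle hmul using fun i : Finset A × ℕ =>
    exists_approx_mul_of_local hsimple hloc i.1 (1 / ((i.2 : ℝ) + 1)) Nat.one_div_pos_of_nat
  let U : Ultrafilter (Finset A × ℕ) := Ultrafilter.of atTop
  have hU : (U : Filter (Finset A × ℕ)) ≤ atTop := Ultrafilter.of_le atTop
  have hsnd : Tendsto (fun i : Finset A × ℕ => 1 / ((i.2 : ℝ) + 1)) U (𝓝 0) :=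
    tendsto_one_div_add_atTop_nhds_zero_nat.comp
      ((tendsto_snd.mono_left (prod_atTop_atTop_eq (α := Finset A) (β := ℕ)).ge).mono_left hU)
  have hfst (G : Finset A) : ∀ᶠ i in (U : Filter (Finset A × ℕ)), G ⊆ i.1 :=
    hU ((eventually_ge_atTop (G, 0)).mono fun i hi => hi.1)
  have hasymp (x y : A) : Tendsto (fun i => ‖φ i (x * y) - φ i x * φ i y‖) U (𝓝 0) := by
    refine squeeze_zero' (.of_forall fun i => norm_nonneg _) ?_ hsnd
    filter_upwards [hfst {x, y}] with i hi
    exact hmul i x (hi (by simp)) y (hi (by simp))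
  have hnorm : ∀ᶠ i in (U : Filter (Finset A × ℕ)), ∀ x ∈ F, ‖x‖ - ε ≤ ‖φ i x‖ := by
    rw [Filter.eventually_all_finset]
    intro x _
    exact ((tendsto_norm_of_asymptotically_mul hsimple U n φ hn hone hcp hstar hle hasymp
      x).eventually (lt_mem_nhds (sub_lt_self _ hε))).mono fun i hi => hi.le
  obtain ⟨i, hi, hFi, hεi⟩ :=
    (hnorm.and ((hfst F).and (hsnd.eventually (gt_mem_nhds hε)))).exists
  exact ⟨n i, φ i, hone i, hcp i, hi, fun x hx y hy =>
    (hmul i x (hFi hx) y (hFi hy)).trans hεi.le⟩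
end
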